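/- Let ψ ∈ C⁰([0,1]) with ψ(0) < 0 and ψ(1) < 0, and suppose there is η > 0 such that ψ is C¹ on [0,η] and on [1−η,1]. Let u₀ ∈ W^{3,∞}(0,1) ∩ H with u₀''(0) = u₀''(1) = 0, and let (u(t))_{t≥0} be the Obstacle Gradient Flow for the elastic energy starting at u₀. Then one of the following holds: (1) there is a sequence θ_n → ∞ such that ‖u(θ_n)'‖_{L^∞(0,1)} → ∞; or (2) there exist a sequence θ_n → ∞ and u_∞ ∈ C such that u(θ_n) → u_∞ in W^{2,2}(0,1) and (∇E(u_∞), v − u_∞) ≥ 0 for all v ∈ C. -/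

import Mathlib

open MeasureTheory Set Filter Topology

noncomputable section

/-- Membership in `H = W^{2,2}(0,1) ∩ W₀^{1,2}(0,1)`: `u1` is the (continuous) derivative of
`u` on `[0,1]`, `u1` is absolutely continuous with (integrable) derivative `u2 ∈ L²(0,1)`,
and `u(0) = u(1) = 0`. -/
def MemH (u u1 u2 : ℝ → ℝ) : Prop :=
  (∀ x ∈ Icc (0:ℝ) 1, HasDerivWithinAt u (u1 x) (Icc 0 1) x) ∧
  (∀ x ∈ Icc (0:ℝ) 1, u1 x = u1 0 + ∫ t in (0:ℝ)..x, u2 t) ∧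
  IntegrableOn u2 (Icc (0:ℝ) 1) ∧
  IntegrableOn (fun x => (u2 x) ^ 2) (Icc (0:ℝ) 1) ∧
  u 0 = 0 ∧ u 1 = 0

/-- Membership in the obstacle set `C = { u ∈ H : u ≥ ψ a.e. }`. -/
def MemC (ψ : ℝ → ℝ) (u u1 u2 : ℝ → ℝ) : Prop :=
  MemH u u1 u2 ∧ ∀ᵐ x ∂(volume.restrict (Icc (0:ℝ) 1)), ψ x ≤ u x

/-- The inner product of `H`: `(u,v) = ∫₀¹ u'' v''` (in terms of the second derivatives). -/
def Hip (u2 v2 : ℝ → ℝ) : ℝ := ∫ x in (0:ℝ)..1, u2 x * v2 x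

/-- The norm of `H`: `‖u‖ = (∫₀¹ (u'')²)^{1/2}` (in terms of the second derivative). -/
def Hnorm (u2 : ℝ → ℝ) : ℝ := Real.sqrt (∫ x in (0:ℝ)..1, (u2 x) ^ 2)

/-- The elastic (Willmore / Euler) bending energy `E(u) = ∫₀¹ u''²/(1+u'²)^{5/2}`. -/
def elE (u1 u2 : ℝ → ℝ) : ℝ :=
  ∫ x in (0:ℝ)..1, (u2 x) ^ 2 / (1 + (u1 x) ^ 2) ^ ((5:ℝ)/2)

/-- The gradient pairing of the elastic energy:
`(∇E(u), φ) = 2∫₀¹ u''φ''/(1+u'²)^{5/2} - 5∫₀¹ u''²u'φ'/(1+u'²)^{7/2}`. -/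
def elDE (u1 u2 φ1 φ2 : ℝ → ℝ) : ℝ :=
  2 * (∫ x in (0:ℝ)..1, u2 x * φ2 x / (1 + (u1 x) ^ 2) ^ ((5:ℝ)/2))
  - 5 * (∫ x in (0:ℝ)..1, (u2 x) ^ 2 * u1 x * φ1 x / (1 + (u1 x) ^ 2) ^ ((7:ℝ)/2))

/-- An Obstacle Gradient Flow for the elastic energy on
`H = W^{2,2}(0,1) ∩ W₀^{1,2}(0,1)` with obstacle set `C = {u ∈ H : u ≥ ψ a.e.}`:
the curve `t ↦ u(t)` (with space derivatives `u1, u2`) starts at `u₀`, stays in `C`,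
is locally `W^{1,2}` in time with values in `H` and a.e. time derivative `v(t) ∈ H`
(with space derivatives `v1, v2`), and satisfies the flow variational inequality
`(u̇(t), w - u(t)) + (∇E(u(t)), w - u(t)) ≥ 0` for all `w ∈ C`, for a.e. `t > 0`. -/
structure IsOGFel (ψ : ℝ → ℝ) (u u1 u2 v v1 v2 : ℝ → ℝ → ℝ)
    (u₀ u₀1 u₀2 : ℝ → ℝ) : Prop where
  init : ∀ x, u 0 x = u₀ x
  init1 : ∀ x ∈ Icc (0:ℝ) 1, u1 0 x = u₀1 x
  init2 : ∀ x ∈ Icc (0:ℝ) 1, u2 0 x = u₀2 x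
  memC : ∀ t : ℝ, 0 ≤ t → MemC ψ (u t) (u1 t) (u2 t)
  vMemH : ∀ᵐ t ∂(volume.restrict (Ioi (0:ℝ))), MemH (v t) (v1 t) (v2 t)
  derivAe : ∀ᵐ t ∂(volume.restrict (Ioi (0:ℝ))),
    Filter.Tendsto (fun h : ℝ => Hnorm (fun x => (u2 (t + h) x - u2 t x) / h - v2 t x))
      (nhdsWithin (0:ℝ) {(0:ℝ)}ᶜ) (nhds 0)
  ftc : ∀ s t : ℝ, 0 ≤ s → s ≤ t → ∀ x ∈ Icc (0:ℝ) 1,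
    u t x - u s x = ∫ r in s..t, v r x
  sqInt : ∀ T : ℝ, 0 < T →
    IntegrableOn (fun t => ∫ x in (0:ℝ)..1, (v2 t x) ^ 2) (Ioc 0 T)
  fvi : ∀ᵐ t ∂(volume.restrict (Ioi (0:ℝ))), ∀ w w1 w2 : ℝ → ℝ, MemC ψ w w1 w2 →
    0 ≤ Hip (v2 t) (fun x => w2 x - u2 t x)
        + elDE (u1 t) (u2 t) (fun x => w1 x - u1 t x) (fun x => w2 x - u2 t x)

/-!
The energy decreases along the flow by `∫ ‖u̇‖²`, so along suitable times `θ n → ∞` the velocity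
`u̇(θ n)` tends to `0`. If the slopes `u'` stay bounded, the energy controls `∫ u''²`, so the flow
is bounded in `H` and, as `u'' ↦ u'` is compact, a subsequence of the slopes `u'(θ n)` converges
uniformly. Testing the variational inequality at each of two such times with the flow at the other
one, the monotonicity of `∇E` up to an error controlled by the slopes makes `u(θ n)` a Cauchy
sequence in `H`, and the variational inequality passes to the limit with `u̇` replaced by `0`.
-/

section AbsoluteContinuity

variable {X Y : Type*} [PseudoMetricSpace X] [PseudoMetricSpace Y] {a b : ℝ}

lemma absolutelyContinuousOnInterval_of_dist_le {F : ℝ → X} {G : ℝ → Y} {K : ℝ}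
    (hG : AbsolutelyContinuousOnInterval G a b)
    (h : ∀ s ∈ uIcc a b, ∀ t ∈ uIcc a b, dist (F s) (F t) ≤ K * dist (G s) (G t)) :
    AbsolutelyContinuousOnInterval F a b := by
  rw [absolutelyContinuousOnInterval_iff] at hG ⊢
  intro ε hε
  obtain ⟨δ, hδ, hG⟩ := hG (ε / (|K| + 1)) (by positivity)
  refine ⟨δ, hδ, fun E hE hlen => ?_⟩
  calc ∑ i ∈ Finset.range E.1, dist (F (E.2 i).1) (F (E.2 i).2)
      ≤ ∑ i ∈ Finset.range E.1, (|K| + 1) * dist (G (E.2 i).1) (G (E.2 i).2) := by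
        refine Finset.sum_le_sum fun i hi => (h _ (hE.1 i hi).1 _ (hE.1 i hi).2).trans ?_
        gcongr
        linarith [le_abs_self K]
    _ = (|K| + 1) * ∑ i ∈ Finset.range E.1, dist (G (E.2 i).1) (G (E.2 i).2) :=
        (Finset.mul_sum ..).symm
    _ < ε := by
        rw [mul_comm, ← lt_div_iff₀ (by positivity)]
        exact hG E hE hlen

lemma absolutelyContinuousOnInterval_comp {F : Type*} [SeminormedAddCommGroup F] {E : F → X}
    {U : ℝ → F} (hE : LocallyLipschitz E) (hU : AbsolutelyContinuousOnInterval U a b) :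
    AbsolutelyContinuousOnInterval (fun t => E (U t)) a b := by
  have hcompact : IsCompact (U '' uIcc a b) :=
    isCompact_uIcc.image_of_continuousOn hU.continuousOn
  obtain ⟨K, hK⟩ := hE.locallyLipschitzOn.exists_lipschitzOnWith_of_compact hcompact
  exact absolutelyContinuousOnInterval_of_dist_le hU fun s hs t ht =>
    hK.dist_le_mul _ (mem_image_of_mem U hs) _ (mem_image_of_mem U ht)

lemma absolutelyContinuousOnInterval_of_sub_eq_integral {H : Type*} [NormedAddCommGroup H]
    [NormedSpace ℝ H] {U V : ℝ → H} (hV : IntervalIntegrable V volume a b) (hab : a ≤ b)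
    (hUV : ∀ s t, a ≤ s → s ≤ t → U t - U s = ∫ r in s..t, V r) :
    AbsolutelyContinuousOnInterval U a b := by
  refine absolutelyContinuousOnInterval_of_dist_le (K := 1)
    (hV.norm.absolutelyContinuousOnInterval_intervalIntegral (c := a) left_mem_uIcc) ?_
  rw [uIcc_of_le hab]
  intro s hs t ht
  wlog hst : s ≤ t generalizing s t
  · simpa only [dist_comm] using this t ht s hs (le_of_not_ge hst)
  have hprimitive : ∀ r ∈ Icc a b, IntervalIntegrable (‖V ·‖) volume a r := fun r hr =>
    hV.norm.mono_set (uIcc_subset_uIcc left_mem_uIcc (by rwa [uIcc_of_le hab]))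
  rw [one_mul, dist_comm, dist_comm (∫ v in a..s, ‖V v‖), dist_eq_norm, hUV s t hs.1 hst,
    Real.dist_eq, intervalIntegral.integral_interval_sub_left (hprimitive t ht) (hprimitive s hs)]
  exact (intervalIntegral.norm_integral_le_integral_norm hst).trans (le_abs_self _)

end AbsoluteContinuity

lemma exists_mem_norm_lt_of_integrable {α F : Type*} [MeasurableSpace α] [NormedAddCommGroup F]
    {μ : Measure α} {f : α → F} (hf : Integrable f μ) {s : Set α} (hs : μ s = ⊤) {p : α → Prop}
    (hp : ∀ᵐ x ∂μ, p x) {ε : ℝ} (hε : 0 < ε) : ∃ x ∈ s, p x ∧ ‖f x‖ < ε := by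
  by_contra! hlarge
  refine (hs ▸ measure_mono_ae ?_ : ⊤ ≤ μ {x | ε ≤ ‖f x‖}).not_gt (hf.measure_norm_ge_lt_top hε)
  filter_upwards [hp] with x hpx hxs using hlarge x hxs hpx

section GradientFlow

variable {H : Type*} [NormedAddCommGroup H] [InnerProductSpace ℝ H]

/-- `U` is a gradient flow of the energy `E` constrained to the set `C`, in the form of a
variational inequality: `U` is locally absolutely continuous with values in `C`, its almost
everywhere derivative `V` is locally square integrable, and `⟪V t, z - U t⟫ + dE(U t)(z - U t)` is
nonnegative for all `z ∈ C` and almost all `t > 0`. -/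
structure IsObstacleGradientFlow (E : H → ℝ) (C : Set H) (U V : ℝ → H) : Prop where
  mem : ∀ t, 0 ≤ t → U t ∈ C
  absolutelyContinuous : ∀ T, 0 < T → AbsolutelyContinuousOnInterval U 0 T
  hasDerivAt : ∀ᵐ t ∂volume.restrict (Ioi 0), HasDerivAt U (V t) t
  sq_integrable : ∀ T, 0 < T → IntervalIntegrable (fun t => ‖V t‖ ^ 2) volume 0 T
  variational_inequality : ∀ᵐ t ∂volume.restrict (Ioi 0), ∀ z ∈ C,
    0 ≤ inner ℝ (V t) (z - U t) + fderiv ℝ E (U t) (z - U t)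

namespace IsObstacleGradientFlow

variable {E : H → ℝ} {C : Set H} {U V : ℝ → H}

-- Testing the variational inequality with past states `U (t + h)`, `h < 0`, and dividing by `h`.
lemma ae_fderiv_velocity_le (hU : IsObstacleGradientFlow E C U V) :
    ∀ᵐ t ∂volume.restrict (Ioi 0), fderiv ℝ E (U t) (V t) ≤ -‖V t‖ ^ 2 := by
  filter_upwards [hU.hasDerivAt, hU.variational_inequality, ae_restrict_mem measurableSet_Ioi]
    with t hderiv hvar ht
  let φ : H →L[ℝ] ℝ := innerSL ℝ (V t) + fderiv ℝ E (U t)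
  have hslope : Tendsto (fun h => φ (h⁻¹ • (U (t + h) - U t))) (𝓝[<] 0) (𝓝 (φ (V t))) :=
    (φ.continuous.tendsto _).comp hderiv.tendsto_slope_zero_left
  have hφ : φ (V t) ≤ 0 := by
    have hpast : ∀ᶠ h : ℝ in 𝓝[<] 0, 0 < t + h :=
      nhdsWithin_le_nhds ((continuous_const.add continuous_id).tendsto' 0 t (add_zero t)
        |>.eventually_const_lt ht)
    refine le_of_tendsto hslope ?_
    filter_upwards [hpast, self_mem_nhdsWithin] with h hth hh
    rw [map_smul]
    exact mul_nonpos_of_nonpos_of_nonneg (inv_nonpos.2 (le_of_lt hh)) (hvar _ (hU.mem _ hth.le))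
  have hsum : ‖V t‖ ^ 2 + fderiv ℝ E (U t) (V t) ≤ 0 := by
    simpa only [φ, add_apply, innerSL_apply_apply, real_inner_self_eq_norm_sq] using hφ
  linarith

lemma energy_add_integral_le (hU : IsObstacleGradientFlow E C U V) (hE : ContDiff ℝ 1 E) {T : ℝ}
    (hT : 0 < T) : E (U T) + ∫ t in (0 : ℝ)..T, ‖V t‖ ^ 2 ≤ E (U 0) := by
  have hac : AbsolutelyContinuousOnInterval (fun t => E (U t)) 0 T :=
    absolutelyContinuousOnInterval_comp hE.locallyLipschitz (hU.absolutelyContinuous T hT)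
  have hderiv : ∀ᵐ t ∂volume.restrict (Ioi 0), deriv (fun t => E (U t)) t ≤ -‖V t‖ ^ 2 := by
    filter_upwards [hU.hasDerivAt, hU.ae_fderiv_velocity_le] with t ht hle
    have hEt := (hE.differentiable one_ne_zero (U t)).hasFDerivAt
    exact (hEt.comp_hasDerivAt t ht).deriv.trans_le hle
  have hint : ∫ t in (0 : ℝ)..T, deriv (fun t => E (U t)) t ≤ ∫ t in (0 : ℝ)..T, -‖V t‖ ^ 2 := by
    refine intervalIntegral.integral_mono_ae_restrict hT.le hac.intervalIntegrable_deriv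
      (hU.sq_integrable T hT).neg ?_
    rw [← restrict_Ioc_eq_restrict_Icc]
    exact ae_restrict_of_ae_restrict_of_subset Ioc_subset_Ioi_self hderiv
  rw [hac.integral_deriv_eq_sub, intervalIntegral.integral_neg] at hint
  linarith

lemma energy_le (hU : IsObstacleGradientFlow E C U V) (hE : ContDiff ℝ 1 E) {t : ℝ} (ht : 0 ≤ t) :
    E (U t) ≤ E (U 0) := by
  rcases ht.eq_or_lt with rfl | ht
  · rfl
  · have hdissipated : 0 ≤ ∫ s in (0 : ℝ)..t, ‖V s‖ ^ 2 :=
      intervalIntegral.integral_nonneg ht.le fun s _ => sq_nonneg _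
    linarith [hU.energy_add_integral_le hE ht]

lemma integrableOn_velocity_sq (hU : IsObstacleGradientFlow E C U V) (hE : ContDiff ℝ 1 E)
    (hbdd : BddBelow (range E)) : IntegrableOn (fun t => ‖V t‖ ^ 2) (Ioi 0) := by
  obtain ⟨m, hm⟩ := hbdd
  refine integrableOn_Ioi_of_intervalIntegral_norm_bounded (l := atTop) (b := id)
    (E (U 0) - m) 0 (fun T => ?_) tendsto_id ?_
  · rcases le_or_gt T 0 with hT | hT
    · simp only [id, Ioc_eq_empty hT.not_gt, integrableOn_empty]
    · exact (hU.sq_integrable T hT).1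
  · filter_upwards [eventually_gt_atTop 0] with T hT
    simp only [norm_pow, norm_norm, id]
    linarith [hU.energy_add_integral_le hE hT, hm (mem_range_self (U T))]

lemma exists_slow_times (hU : IsObstacleGradientFlow E C U V) (hE : ContDiff ℝ 1 E)
    (hbdd : BddBelow (range E)) : ∃ τ : ℕ → ℝ, (∀ n, 0 ≤ τ n) ∧ Tendsto τ atTop atTop ∧
      Tendsto (fun n => V (τ n)) atTop (𝓝 0) ∧
      ∀ n, ∀ z ∈ C, 0 ≤ inner ℝ (V (τ n)) (z - U (τ n)) + fderiv ℝ E (U (τ n)) (z - U (τ n)) := by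
  have hslow : ∀ n : ℕ, ∃ t ∈ Ici (n : ℝ), (∀ z ∈ C,
      0 ≤ inner ℝ (V t) (z - U t) + fderiv ℝ E (U t) (z - U t)) ∧
      ‖‖V t‖ ^ 2‖ < (1 / ((n : ℝ) + 1)) ^ 2 := fun n => by
    refine exists_mem_norm_lt_of_integrable (hU.integrableOn_velocity_sq hE hbdd) ?_
      hU.variational_inequality (by positivity)
    refine measure_mono_top (s₁ := Ioi (n : ℝ)) Ioi_subset_Ici_self ?_
    rw [Measure.restrict_apply measurableSet_Ioi,
      inter_eq_left.2 (Ioi_subset_Ioi n.cast_nonneg), Real.volume_Ioi]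
  choose τ hτn hvar hslow using hslow
  refine ⟨τ, fun n => n.cast_nonneg.trans (hτn n),
    tendsto_atTop_mono hτn tendsto_natCast_atTop_atTop, ?_, hvar⟩
  refine squeeze_zero_norm (fun n => ?_) tendsto_one_div_add_atTop_nhds_zero_nat
  have := hslow n
  rw [norm_pow, norm_norm] at this
  exact (lt_of_pow_lt_pow_left₀ 2 (by positivity) this).le

end IsObstacleGradientFlow

lemma fderiv_sub_nonneg_of_tendsto {E : H → ℝ} (hE : ContDiff ℝ 1 E) {f V : ℕ → H} {w z : H}
    (hf : Tendsto f atTop (𝓝 w)) (hV : Tendsto V atTop (𝓝 0))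
    (hvar : ∀ n, 0 ≤ inner ℝ (V n) (z - f n) + fderiv ℝ E (f n) (z - f n)) :
    0 ≤ fderiv ℝ E w (z - w) := by
  have hsub : Tendsto (fun n => z - f n) atTop (𝓝 (z - w)) := tendsto_const_nhds.sub hf
  have hfderiv : Tendsto (fun n => fderiv ℝ E (f n) (z - f n)) atTop (𝓝 (fderiv ℝ E w (z - w))) :=
    ((hE.continuous_fderiv_apply one_ne_zero).tendsto (w, z - w)).comp (hf.prodMk_nhds hsub)
  have hinner : Tendsto (fun n => inner ℝ (V n) (z - f n)) atTop (𝓝 0) := by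
    simpa only [inner_zero_left] using hV.inner hsub (𝕜 := ℝ)
  simpa only [zero_add] using ge_of_tendsto' (hinner.add hfderiv) hvar

end GradientFlow

section GardingInequality

variable {H Y : Type*} [NormedAddCommGroup H] [InnerProductSpace ℝ H]
  [NormedAddCommGroup Y] [NormedSpace ℝ Y]

/-- The derivative of `E` is strongly monotone on bounded sets up to an error measured by `P`. When
`P` is a compact operator the error is negligible along subsequences of bounded sequences, which
makes `E` satisfy a Palais–Smale type condition. -/
def HasGardingInequality (E : H → ℝ) (P : H →L[ℝ] Y) : Prop :=
  ∀ R, ∃ c > 0, ∃ K, ∀ f h, ‖f‖ ≤ R → ‖h‖ ≤ R →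
    c * ‖f - h‖ ^ 2 ≤ (fderiv ℝ E f - fderiv ℝ E h) (f - h) + K * ‖P f - P h‖

lemma cauchySeq_of_hasGardingInequality {E : H → ℝ} {P : H →L[ℝ] Y} (hE : HasGardingInequality E P)
    {R : ℝ} {f V : ℕ → H} (hf : ∀ n, ‖f n‖ ≤ R) (hPf : CauchySeq fun n => P (f n))
    (hV : Tendsto V atTop (𝓝 0))
    (hvar : ∀ m n, 0 ≤ inner ℝ (V n) (f m - f n) + fderiv ℝ E (f n) (f m - f n)) :
    CauchySeq f := by
  obtain ⟨c, hc, K, hgarding⟩ := hE R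
  have hestimate : ∀ m n, c * ‖f m - f n‖ ^ 2 ≤
      2 * R * (‖V m‖ + ‖V n‖) + K * dist (P (f m)) (P (f n)) := fun m n => by
    have hdiam : ‖f m - f n‖ ≤ 2 * R := (norm_sub_le _ _).trans (by linarith [hf m, hf n])
    have hinner : ∀ k, |inner ℝ (V k) (f m - f n)| ≤ ‖V k‖ * (2 * R) := fun k =>
      (abs_real_inner_le_norm _ _).trans (by gcongr)
    have hmn := hvar m n
    have hnm := hvar n m
    rw [← neg_sub (f m) (f n), map_neg, inner_neg_right] at hnm
    have := hgarding (f m) (f n) (hf m) (hf n)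
    rw [sub_apply] at this
    rw [dist_eq_norm]
    linarith [neg_le_of_abs_le (hinner m), le_of_abs_le (hinner n)]
  have hV0 : Tendsto (fun n => ‖V n‖) atTop (𝓝 0) := tendsto_zero_iff_norm_tendsto_zero.1 hV
  rw [cauchySeq_iff_tendsto_dist_atTop_0, ← prod_atTop_atTop_eq] at hPf ⊢
  have hbound : Tendsto (fun p : ℕ × ℕ => c⁻¹ *
      (2 * R * (‖V p.1‖ + ‖V p.2‖) + K * dist (P (f p.1)) (P (f p.2)))) (atTop ×ˢ atTop) (𝓝 0) := by
    have := ((((hV0.comp tendsto_fst).add (hV0.comp tendsto_snd)).const_mul (2 * R)).add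
      (hPf.const_mul K)).const_mul c⁻¹
    simpa only [add_zero, mul_zero, Function.comp_apply] using this
  have hsq : Tendsto (fun p : ℕ × ℕ => dist (f p.1) (f p.2) ^ 2) (atTop ×ˢ atTop) (𝓝 0) := by
    refine squeeze_zero (fun p => sq_nonneg _) (fun p => ?_) hbound
    rw [dist_eq_norm, inv_mul_eq_div, le_div_iff₀' hc]
    exact hestimate p.1 p.2
  simpa only [Real.sqrt_sq dist_nonneg, Real.sqrt_zero] using hsq.sqrt

theorem exists_tendsto_of_bounded_obstacleGradientFlow [CompleteSpace H] {E : H → ℝ}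
    {P : H →L[ℝ] Y} {C : Set H} {U V : ℝ → H} (hU : IsObstacleGradientFlow E C U V)
    (hC : IsClosed C) (hE : ContDiff ℝ 1 E) (hbelow : BddBelow (range E))
    (hgarding : HasGardingInequality E P) (hP : IsCompactOperator P)
    (hbdd : ∃ R, ∀ᶠ t in atTop, ‖U t‖ ≤ R) :
    ∃ θ : ℕ → ℝ, (∀ n, 0 ≤ θ n) ∧ Tendsto θ atTop atTop ∧ ∃ w ∈ C,
      Tendsto (fun n => U (θ n)) atTop (𝓝 w) ∧ ∀ z ∈ C, 0 ≤ fderiv ℝ E w (z - w) := by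
  obtain ⟨τ, hτ0, hτ, hVτ, hvar⟩ := hU.exists_slow_times hE hbelow
  obtain ⟨R, hR⟩ := hbdd
  obtain ⟨N, hN⟩ := eventually_atTop.1 (hτ.eventually hR)
  obtain ⟨S, hS, hPS⟩ := hP.image_closedBall_subset_compact (𝕜₁ := ℝ) (f := (P : H →ₗ[ℝ] Y)) R
  obtain ⟨_, -, φ, hφ, hPφ⟩ := hS.tendsto_subseq (x := fun n => P (U (τ (n + N))))
    fun n => hPS (mem_image_of_mem P (mem_closedBall_zero_iff.2 (hN _ (by lia))))
  have hσ : Tendsto (fun n => φ n + N) atTop atTop :=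
    (tendsto_add_atTop_nat N).comp hφ.tendsto_atTop
  have hVσ := hVτ.comp hσ
  have hmem : ∀ n, U (τ n) ∈ C := fun n => hU.mem _ (hτ0 n)
  obtain ⟨w, hw⟩ := cauchySeq_tendsto_of_complete <|
    cauchySeq_of_hasGardingInequality hgarding
      (f := fun n => U (τ (φ n + N))) (fun n => hN _ (by lia)) hPφ.cauchySeq hVσ
      fun m n => hvar (φ n + N) _ (hmem _)
  exact ⟨fun n => τ (φ n + N), fun n => hτ0 _, hτ.comp hσ, w,
    hC.mem_of_tendsto hw (Eventually.of_forall fun n => hmem _), hw,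
    fun z hz => fderiv_sub_nonneg_of_tendsto hE hw hVσ fun n => hvar _ z hz⟩

end GardingInequality

section SuperpositionOperator

variable {X : Type*} [TopologicalSpace X] [CompactSpace X]

lemma exists_norm_comp_le (g : C(ℝ, ℝ)) (S : ℝ) :
    ∃ K, 0 ≤ K ∧ ∀ a : C(X, ℝ), ‖a‖ ≤ S → ‖g.comp a‖ ≤ K := by
  obtain ⟨K, hK⟩ := (isCompact_Icc (a := -S) (b := S)).exists_bound_of_continuousOn
    g.continuous.continuousOn
  refine ⟨max K 0, le_max_right .., fun a ha => ?_⟩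
  exact (ContinuousMap.norm_le _ (le_max_right ..)).2 fun x =>
    (hK _ (abs_le.1 ((a.norm_coe_le_norm x).trans ha))).trans (le_max_left ..)

lemma exists_pos_le_comp {g : C(ℝ, ℝ)} (hg : ∀ p, 0 < g p) (S : ℝ) :
    ∃ c > 0, ∀ a : C(X, ℝ), ‖a‖ ≤ S → ∀ x, c ≤ g.comp a x := by
  obtain ⟨c, hc, hcg⟩ := (isCompact_Icc (a := -S) (b := S)).exists_forall_le'
    g.continuous.continuousOn fun p _ => hg p
  exact ⟨c, hc, fun a ha x => hcg _ (abs_le.1 ((a.norm_coe_le_norm x).trans ha))⟩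

lemma exists_norm_comp_sub_comp_le {g g' : C(ℝ, ℝ)} (hg : ∀ p, HasDerivAt g (g' p) p) (S : ℝ) :
    ∃ K, 0 ≤ K ∧ ∀ a b : C(X, ℝ), ‖a‖ ≤ S → ‖b‖ ≤ S → ‖g.comp a - g.comp b‖ ≤ K * ‖a - b‖ := by
  obtain ⟨K, hK⟩ := (isCompact_Icc (a := -S) (b := S)).exists_bound_of_continuousOn
    g'.continuous.continuousOn
  refine ⟨max K 0, le_max_right .., fun a b ha hb =>
    (ContinuousMap.norm_le _ (by positivity)).2 fun x => ?_⟩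
  have hmem : ∀ f : C(X, ℝ), ‖f‖ ≤ S → f x ∈ Icc (-S) S := fun f hf =>
    abs_le.1 ((f.norm_coe_le_norm x).trans hf)
  calc ‖g (a x) - g (b x)‖ ≤ K * ‖a x - b x‖ :=
        (convex_Icc (-S) S).norm_image_sub_le_of_norm_hasDerivWithin_le
          (fun p _ => (hg p).hasDerivWithinAt) hK (hmem b hb) (hmem a ha)
    _ ≤ max K 0 * ‖a - b‖ := by
        gcongr
        · exact le_max_left ..
        · exact (a - b).norm_coe_le_norm x

lemma hasFDerivAt_comp_left {g g' : C(ℝ, ℝ)} (hg : ∀ p, HasDerivAt g (g' p) p) (a : C(X, ℝ)) :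
    HasFDerivAt (fun b : C(X, ℝ) => g.comp b)
      (ContinuousLinearMap.mul ℝ C(X, ℝ) (g'.comp a)) a := by
  rw [hasFDerivAt_iff_isLittleO, Asymptotics.isLittleO_iff]
  intro c hc
  have huniform := (isCompact_range a.continuous).uniformContinuousAt_of_continuousAt g'
    (fun p _ => g'.continuous.continuousAt) (Metric.dist_mem_uniformity hc)
  obtain ⟨δ, hδ, huniform⟩ := Metric.mem_uniformity_dist.1 huniform
  filter_upwards [Metric.ball_mem_nhds a hδ] with b hb
  refine (ContinuousMap.norm_le _ (by positivity)).2 fun x => ?_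
  have hderiv : ∀ p ∈ uIcc (a x) (b x),
      HasDerivWithinAt (fun p => g p - g' (a x) * p) (g' p - g' (a x)) (uIcc (a x) (b x)) p :=
    fun p _ => ((hg p).sub (hasDerivAt_const_mul _)).hasDerivWithinAt
  have hbound : ∀ p ∈ uIcc (a x) (b x), ‖g' p - g' (a x)‖ ≤ c := fun p hp => by
    have hdist : dist (a x) p < δ := by
      rw [dist_comm, Real.dist_eq]
      exact (abs_sub_left_of_mem_uIcc hp).trans_lt
        (((b - a).norm_coe_le_norm x).trans_lt (mem_ball_iff_norm.1 hb))
    rw [← dist_eq_norm, dist_comm]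
    exact (huniform hdist (mem_range_self x)).le
  calc ‖g (b x) - g (a x) - g' (a x) * (b x - a x)‖
      = ‖g (b x) - g' (a x) * b x - (g (a x) - g' (a x) * a x)‖ := by ring_nf
    _ ≤ c * ‖b x - a x‖ :=
        (convex_uIcc (a x) (b x)).norm_image_sub_le_of_norm_hasDerivWithin_le hderiv hbound
          left_mem_uIcc right_mem_uIcc
    _ ≤ c * ‖b - a‖ := by gcongr; exact (b - a).norm_coe_le_norm x

end SuperpositionOperator

section WeightedEnergy

variable {X : Type*} [TopologicalSpace X] [CompactSpace X] [MeasurableSpace X] [BorelSpace X]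
  {μ : Measure X} [IsFiniteMeasure μ]

variable (μ) in
/-- Multiplication of functions in `L²(μ)` by continuous functions. -/
def mulL2 : C(X, ℝ) →L[ℝ] Lp ℝ 2 μ →L[ℝ] Lp ℝ 2 μ :=
  (ContinuousLinearMap.mul ℝ ℝ).holderL μ ⊤ 2 2 ∘L ContinuousMap.toLp ⊤ μ ℝ

lemma coeFn_mulL2 (a : C(X, ℝ)) (f : Lp ℝ 2 μ) : mulL2 μ a f =ᵐ[μ] fun x => a x * f x := by
  filter_upwards [(ContinuousLinearMap.mul ℝ ℝ).coeFn_holder (r := 2)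
    (ContinuousMap.toLp ⊤ μ ℝ a) f, ContinuousMap.coeFn_toLp μ (𝕜 := ℝ) (p := ⊤) a] with x hx ha
  rw [← ha]
  exact hx

lemma inner_mulL2 (a : C(X, ℝ)) (f h : Lp ℝ 2 μ) :
    inner ℝ (mulL2 μ a f) h = ∫ x, a x * (f x * h x) ∂μ := by
  rw [L2.inner_def]
  refine integral_congr_ae ?_
  filter_upwards [coeFn_mulL2 a f] with x hx
  rw [hx, Real.inner_apply, mul_assoc]

lemma inner_mulL2_comm (a : C(X, ℝ)) (f h : Lp ℝ 2 μ) :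
    inner ℝ (mulL2 μ a f) h = inner ℝ (mulL2 μ a h) f := by
  simp only [inner_mulL2, mul_comm (f _)]

lemma abs_inner_mulL2_le (a : C(X, ℝ)) (f h : Lp ℝ 2 μ) :
    |inner ℝ (mulL2 μ a f) h| ≤ ‖mulL2 μ‖ * ‖a‖ * ‖f‖ * ‖h‖ :=
  (abs_real_inner_le_norm _ _).trans (by gcongr; exact (mulL2 μ).le_opNorm₂ a f)

lemma mul_norm_sq_le_inner_mulL2 {c : ℝ} {a : C(X, ℝ)} (hca : ∀ x, c ≤ a x) (f : Lp ℝ 2 μ) :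
    c * ‖f‖ ^ 2 ≤ inner ℝ (mulL2 μ a f) f := by
  have hint : ∀ b : C(X, ℝ), Integrable (fun x => b x * (f x * f x)) μ := fun b => by
    refine (L2.integrable_inner (𝕜 := ℝ) (mulL2 μ b f) f).congr ?_
    filter_upwards [coeFn_mulL2 b f] with x hx
    rw [hx, Real.inner_apply, mul_assoc]
  rw [← real_inner_self_eq_norm_sq, L2.inner_def, inner_mulL2, ← integral_const_mul]
  exact integral_mono (hint (.const X c)) (hint a) fun x =>
    mul_le_mul_of_nonneg_right (hca x) (mul_self_nonneg _)

/-- The quadratic energy `∫ g(P f) f² dμ`, whose weight depends on `f` through the operator `P`. -/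
def weightedEnergy (g : C(ℝ, ℝ)) (P : Lp ℝ 2 μ →L[ℝ] C(X, ℝ)) (f : Lp ℝ 2 μ) : ℝ :=
  inner ℝ (mulL2 μ (g.comp (P f)) f) f

variable {g g' : C(ℝ, ℝ)} {P : Lp ℝ 2 μ →L[ℝ] C(X, ℝ)}

lemma weightedEnergy_nonneg (hg : ∀ p, 0 ≤ g p) (f : Lp ℝ 2 μ) : 0 ≤ weightedEnergy g P f := by
  simpa only [zero_mul] using! mul_norm_sq_le_inner_mulL2 (a := g.comp (P f)) (fun x => hg _) f

lemma exists_norm_le_of_weightedEnergy_le (hg : ∀ p, 0 < g p) (S M : ℝ) :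
    ∃ R, ∀ f, ‖P f‖ ≤ S → weightedEnergy g P f ≤ M → ‖f‖ ≤ R := by
  obtain ⟨c, hc, hcg⟩ := exists_pos_le_comp (X := X) hg S
  refine ⟨√(M / c), fun f hP hM => Real.le_sqrt_of_sq_le ?_⟩
  rw [le_div_iff₀' hc]
  exact (mul_norm_sq_le_inner_mulL2 (hcg _ hP) f).trans hM

/-- The derivative of `weightedEnergy g P` at `f`, written with the derivative `g'` of `g`. -/
def weightedEnergyDeriv (g g' : C(ℝ, ℝ)) (P : Lp ℝ 2 μ →L[ℝ] C(X, ℝ)) (f : Lp ℝ 2 μ) :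
    Lp ℝ 2 μ →L[ℝ] ℝ :=
  (2 : ℝ) • innerSL ℝ (mulL2 μ (g.comp (P f)) f) + innerSL ℝ f ∘L (mulL2 μ).flip f ∘L
    ContinuousLinearMap.mul ℝ C(X, ℝ) (g'.comp (P f)) ∘L P

lemma weightedEnergyDeriv_apply (f h : Lp ℝ 2 μ) : weightedEnergyDeriv g g' P f h =
    2 * inner ℝ (mulL2 μ (g.comp (P f)) f) h +
      inner ℝ (mulL2 μ (g'.comp (P f) * P h) f) f := by
  rw [real_inner_comm f]
  rfl

lemma hasFDerivAt_weightedEnergy (hg : ∀ p, HasDerivAt g (g' p) p) (f : Lp ℝ 2 μ) :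
    HasFDerivAt (weightedEnergy g P) (weightedEnergyDeriv g g' P f) f := by
  have hweight : HasFDerivAt (fun f => mulL2 μ (g.comp (P f)))
      (mulL2 μ ∘L ContinuousLinearMap.mul ℝ C(X, ℝ) (g'.comp (P f)) ∘L P) f :=
    (mulL2 μ).hasFDerivAt.comp f ((hasFDerivAt_comp_left hg (P f)).comp f P.hasFDerivAt)
  refine ((hweight.clm_apply (hasFDerivAt_id f)).inner ℝ (hasFDerivAt_id f)).congr_fderiv ?_
  ext h
  have happly : inner ℝ (mulL2 μ (g.comp (P f)) f) h + inner ℝ (mulL2 μ (g.comp (P f)) h +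
      mulL2 μ (g'.comp (P f) * P h) f) f = weightedEnergyDeriv g g' P f h := by
    rw [weightedEnergyDeriv_apply, inner_add_left, inner_mulL2_comm (g.comp (P f)) h f]
    ring
  exact happly

lemma contDiff_weightedEnergy (hg : ∀ p, HasDerivAt g (g' p) p) :
    ContDiff ℝ 1 (weightedEnergy g P) := by
  rw [contDiff_one_iff_fderiv]
  refine ⟨fun f => (hasFDerivAt_weightedEnergy hg f).differentiableAt, ?_⟩
  rw [funext fun f => (hasFDerivAt_weightedEnergy (P := P) hg f).fderiv]
  have hcomp : ∀ q : C(ℝ, ℝ), Continuous fun f => q.comp (P f) := fun q =>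
    (ContinuousMap.continuous_postcomp q).comp P.continuous
  unfold weightedEnergyDeriv
  have := hcomp g
  have := hcomp g'
  fun_prop

lemma weightedEnergyDeriv_sub_apply_sub (f h : Lp ℝ 2 μ) :
    (weightedEnergyDeriv g g' P f - weightedEnergyDeriv g g' P h) (f - h) =
      2 * inner ℝ (mulL2 μ (g.comp (P f)) (f - h)) (f - h) +
      2 * inner ℝ (mulL2 μ (g.comp (P f) - g.comp (P h)) h) (f - h) +
      inner ℝ (mulL2 μ (g'.comp (P f) * (P f - P h)) f) f -
      inner ℝ (mulL2 μ (g'.comp (P h) * (P f - P h)) h) h := by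
  have hsplit : inner ℝ (mulL2 μ (g.comp (P f)) f) (f - h) -
      inner ℝ (mulL2 μ (g.comp (P h)) h) (f - h) =
      inner ℝ (mulL2 μ (g.comp (P f)) (f - h)) (f - h) +
      inner ℝ (mulL2 μ (g.comp (P f) - g.comp (P h)) h) (f - h) := by
    rw [← inner_sub_left, ← inner_add_left, map_sub (mulL2 μ (g.comp (P f))), map_sub (mulL2 μ),
      sub_apply, sub_add_sub_cancel]
  rw [sub_apply, weightedEnergyDeriv_apply, weightedEnergyDeriv_apply, map_sub P]
  linarith

lemma hasGardingInequality_weightedEnergy (hg : ∀ p, HasDerivAt g (g' p) p) (hpos : ∀ p, 0 < g p) :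
    HasGardingInequality (weightedEnergy g P) P := by
  intro R
  obtain ⟨c, hc, hcg⟩ := exists_pos_le_comp (X := X) hpos (‖P‖ * R)
  obtain ⟨K₁, hK₁, hbound⟩ := exists_norm_comp_le (X := X) g' (‖P‖ * R)
  obtain ⟨K₂, hK₂, hlip⟩ := exists_norm_comp_sub_comp_le (X := X) hg (‖P‖ * R)
  refine ⟨2 * c, by positivity, ‖mulL2 μ‖ * (4 * K₂ + 2 * K₁) * R ^ 2, fun f h hf hh => ?_⟩
  have hR : 0 ≤ R := (norm_nonneg f).trans hf
  have hP : ∀ q, ‖q‖ ≤ R → ‖P q‖ ≤ ‖P‖ * R := fun q hq => (P.le_opNorm q).trans (by gcongr)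
  have hdiam : ‖f - h‖ ≤ 2 * R := (norm_sub_le _ _).trans (by linarith)
  have hcoercive := mul_norm_sq_le_inner_mulL2 (hcg _ (hP f hf)) (f - h)
  have hweight : |inner ℝ (mulL2 μ (g.comp (P f) - g.comp (P h)) h) (f - h)| ≤
      ‖mulL2 μ‖ * (K₂ * ‖P f - P h‖) * R * (2 * R) :=
    (abs_inner_mulL2_le _ _ _).trans (by gcongr; exact hlip _ _ (hP f hf) (hP h hh))
  have hslope : ∀ q, ‖q‖ ≤ R → |inner ℝ (mulL2 μ (g'.comp (P q) * (P f - P h)) q) q| ≤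
      ‖mulL2 μ‖ * (K₁ * ‖P f - P h‖) * R * R := fun q hq =>
    (abs_inner_mulL2_le _ _ _).trans
      (by gcongr; exact (norm_mul_le _ _).trans (by gcongr; exact hbound _ (hP q hq)))
  rw [(hasFDerivAt_weightedEnergy hg f).fderiv, (hasFDerivAt_weightedEnergy hg h).fderiv,
    weightedEnergyDeriv_sub_apply_sub]
  linarith [neg_le_of_abs_le hweight, neg_le_of_abs_le (hslope f hf), le_of_abs_le (hslope h hh)]

end WeightedEnergy

section KernelOperator

variable {X H : Type*} [TopologicalSpace X] [CompactSpace X] [NormedAddCommGroup H]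
  [InnerProductSpace ℝ H]

/-- The operator `f ↦ (x ↦ ⟪k x, f⟫)` with continuous kernel `k`, from an inner product
space to continuous functions. -/
def kernelOperator (k : C(X, H)) : H →L[ℝ] C(X, ℝ) :=
  LinearMap.mkContinuous
    { toFun := fun f => ⟨fun x => inner ℝ (k x) f, by fun_prop⟩
      map_add' := fun f h => ContinuousMap.ext fun x => inner_add_right (k x) f h
      map_smul' := fun c f => ContinuousMap.ext fun x => real_inner_smul_right (k x) f c }
    ‖k‖ fun f => (ContinuousMap.norm_le _ (by positivity)).2 fun x =>
      (norm_inner_le_norm (k x) f).trans (by gcongr; exact k.norm_coe_le_norm x)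

lemma kernelOperator_apply (k : C(X, H)) (f : H) (x : X) :
    kernelOperator k f x = inner ℝ (k x) f := rfl

lemma isCompactOperator_kernelOperator (k : C(X, H)) : IsCompactOperator (kernelOperator k) := by
  let e : C(X, ℝ) ≃ₗᵢ[ℝ] BoundedContinuousFunction X ℝ :=
    ContinuousMap.linearIsometryBoundedOfCompact X ℝ ℝ
  suffices hcompact : IsCompactOperator (e ∘ kernelOperator k) by
    simpa only [← Function.comp_assoc, e.symm_comp_self, Function.id_comp] using
      hcompact.continuous_comp e.symm.continuous
  refine (isCompactOperator_iff_isCompact_closure_image_closedBall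
    (e.toLinearEquiv.toLinearMap ∘ₗ (kernelOperator k).toLinearMap) one_pos).2 ?_
  refine BoundedContinuousFunction.arzela_ascoli _ (isCompact_closedBall 0 (‖kernelOperator k‖ * 1))
    _ ?_ fun x => ?_
  · rintro _ x ⟨f, hf, rfl⟩
    rw [mem_closedBall_zero_iff] at hf ⊢
    exact ((kernelOperator k f).norm_coe_le_norm x).trans ((kernelOperator k).le_opNorm_of_le hf)
  · refine Metric.equicontinuousAt_of_continuity_modulus (fun y => ‖k x - k y‖) ?_ _ ?_
    · have hcont : Continuous fun y => ‖k x - k y‖ := by fun_prop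
      simpa only [sub_self, norm_zero] using! hcont.tendsto x
    · filter_upwards with y
      rintro ⟨_, f, hf, rfl⟩
      calc ‖inner ℝ (k x) f - inner ℝ (k y) f‖ = ‖inner ℝ (k x - k y) f‖ := by
            rw [inner_sub_left]
        _ ≤ ‖k x - k y‖ * ‖f‖ := norm_inner_le_norm _ _
        _ ≤ ‖k x - k y‖ := mul_le_of_le_one_right (norm_nonneg _) (mem_closedBall_zero_iff.1 hf)

end KernelOperator

section UnitInterval

open unitInterval

lemma setIntegral_Iic_coe (f : ℝ → ℝ) (x : I) : ∫ y in Iic x, f y = ∫ y in (0 : ℝ)..x, f y := by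
  have hpre : Iic x = ((↑) : I → ℝ) ⁻¹' Iic x := rfl
  have hinter : Iic (x : ℝ) ∩ I = Icc (0 : ℝ) x := by
    ext y
    exact ⟨fun hy => ⟨hy.2.1, hy.1⟩, fun hy => ⟨hy.2, hy.1, hy.2.trans x.2.2⟩⟩
  rw [hpre, measurePreserving_coe.setIntegral_preimage_emb measurableEmbedding_coe,
    Measure.restrict_restrict measurableSet_Iic, hinter, integral_Icc_eq_integral_Ioc,
    intervalIntegral.integral_of_le x.2.1]

lemma integral_coe_unitInterval (f : ℝ → ℝ) : ∫ y : I, f y = ∫ y in (0 : ℝ)..1, f y := by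
  have huniv : Iic (1 : I) = univ := Iic_top
  rw [← setIntegral_univ, ← huniv, setIntegral_Iic_coe, Icc.coe_one]

lemma integrable_coe_unitInterval_iff {f : ℝ → ℝ} :
    Integrable (fun y : I => f y) ↔ IntegrableOn f (Icc 0 1) :=
  measurePreserving_coe.integrable_comp_emb measurableEmbedding_coe

/-- The space `L²(0,1)` of second derivatives of elements of `W^{2,2}(0,1) ∩ W₀^{1,2}(0,1)`;
`u ↦ u''` is an isometry between these Hilbert spaces. -/
abbrev UnitIntervalL2 : Type := Lp ℝ 2 (volume : Measure I)

/-- The indicator function of `[0, x]` in `L²(0,1)`. -/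
def initialIndicator (x : I) : UnitIntervalL2 :=
  indicatorConstLp 2 measurableSet_Iic (measure_ne_top volume (Iic x)) 1

lemma continuous_initialIndicator : Continuous initialIndicator := by
  refine continuous_indicatorConstLp_set (by norm_num) fun x => ?_
  have hsymmDiff : ∀ y, symmDiff (Iic y) (Iic x) = uIoc x y := fun y => by
    ext z
    simp only [mem_symmDiff, mem_Iic, mem_uIoc, not_le]
    tauto
  have hcont : Continuous fun y => edist y x := by fun_prop
  simpa only [hsymmDiff, volume_uIoc, edist_self] using hcont.tendsto x

lemma integrable_initialIndicator : Integrable initialIndicator :=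
  continuous_initialIndicator.integrable_of_hasCompactSupport (.of_compactSpace _)

/-- The kernel of the operator `u'' ↦ u'`: the indicator of `[0, x]` minus its mean over `x`, which
makes the derivative `u'` integrate to `u(1) - u(0) = 0`. -/
def slopeKernel : C(I, UnitIntervalL2) where
  toFun x := initialIndicator x - ∫ y, initialIndicator y
  continuous_toFun := continuous_initialIndicator.sub continuous_const

/-- The operator `u'' ↦ u'` on `W^{2,2}(0,1) ∩ W₀^{1,2}(0,1)`. -/
def slopeOp : UnitIntervalL2 →L[ℝ] C(I, ℝ) := kernelOperator slopeKernel

lemma slopeOp_apply (f : UnitIntervalL2) (x : I) :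
    slopeOp f x = (∫ y in Iic x, f y) - ∫ z, ∫ y in Iic z, f y := by
  have hinner : ∀ z, inner ℝ (initialIndicator z) f = ∫ y in Iic z, f y := fun z =>
    L2.inner_indicatorConstLp_one measurableSet_Iic _ f
  have hmean : inner ℝ (∫ z, initialIndicator z) f = ∫ z, ∫ y in Iic z, f y := by
    rw [real_inner_comm, ← integral_inner integrable_initialIndicator]
    simp only [real_inner_comm _ f, hinner]
  rw [← hinner, ← hmean, ← inner_sub_left]
  exact kernelOperator_apply slopeKernel f x

/-- The functional `u'' ↦ u(x)` on `W^{2,2}(0,1) ∩ W₀^{1,2}(0,1)`. -/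
def heightAt (x : I) : UnitIntervalL2 →L[ℝ] ℝ := innerSL ℝ (∫ y in Iic x, slopeKernel y)

lemma heightAt_apply (x : I) (f : UnitIntervalL2) : heightAt x f = ∫ y in Iic x, slopeOp f y := by
  change inner ℝ (∫ y in Iic x, slopeKernel y) f = _
  rw [real_inner_comm, ← integral_inner (slopeKernel.continuous.integrable_of_hasCompactSupport
    (.of_compactSpace _)).restrict]
  simp only [slopeOp, kernelOperator_apply, real_inner_comm _ f]

lemma heightAt_one : heightAt 1 = 0 := by
  have hzero : ∫ x, (initialIndicator x - ∫ y, initialIndicator y) = 0 := by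
    rw [integral_sub integrable_initialIndicator (integrable_const _), integral_const,
      probReal_univ, one_smul, sub_self]
  have huniv : Iic (1 : I) = univ := Iic_top
  rw [heightAt, huniv, setIntegral_univ]
  exact (congrArg (innerSL ℝ) hzero).trans (map_zero _)

lemma abs_heightAt_le (x : I) (f : UnitIntervalL2) : |heightAt x f| ≤ ‖slopeOp f‖ := by
  rw [heightAt_apply]
  exact (norm_setIntegral_le_of_norm_le_const (measure_lt_top ..)
    fun y _ => (slopeOp f).norm_coe_le_norm y).trans
      (mul_le_of_le_one_right (norm_nonneg _) measureReal_le_one)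

end UnitInterval

section SobolevFunctions

open unitInterval

open Classical in
/-- The class in `L²(0,1)` of a function on `[0,1]`, with value `0` if the function is not square
integrable. -/
def toL2 (f : ℝ → ℝ) : UnitIntervalL2 :=
  if hf : MemLp (fun x : I => f x) 2 then hf.toLp else 0

variable {f h : ℝ → ℝ}

lemma toL2_of_memLp (hf : MemLp (fun x : I => f x) 2) : toL2 f = hf.toLp := dif_pos hf

lemma coeFn_toL2 (hf : MemLp (fun x : I => f x) 2) : toL2 f =ᵐ[volume] fun x : I => f x := by
  rw [toL2_of_memLp hf]
  exact hf.coeFn_toLp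

lemma toL2_sub (hf : MemLp (fun x : I => f x) 2) (hh : MemLp (fun x : I => h x) 2) :
    toL2 (fun x => f x - h x) = toL2 f - toL2 h := by
  rw [toL2_of_memLp hf, toL2_of_memLp hh, ← MemLp.toLp_sub]
  exact toL2_of_memLp (hf.sub hh)

lemma toL2_div_const (hf : MemLp (fun x : I => f x) 2) (c : ℝ) :
    toL2 (fun x => f x / c) = c⁻¹ • toL2 f := by
  simp only [div_eq_inv_mul]
  rw [toL2_of_memLp hf, ← MemLp.toLp_const_smul]
  exact toL2_of_memLp (hf.const_smul c⁻¹)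

lemma toL2_IccExtend (f : UnitIntervalL2) : toL2 (IccExtend zero_le_one f) = f := by
  have hval : (fun x : I => IccExtend zero_le_one f x) = f := funext (IccExtend_val zero_le_one _)
  have hmem : MemLp (fun x : I => IccExtend zero_le_one f x) 2 := by
    rw [hval]
    exact Lp.memLp f
  rw [toL2_of_memLp hmem]
  exact (MemLp.toLp_congr hmem (Lp.memLp f) (.of_eq hval)).trans (Lp.toLp_coeFn f (Lp.memLp f))

lemma Hip_eq_inner (hf : MemLp (fun x : I => f x) 2) (hh : MemLp (fun x : I => h x) 2) :
    Hip f h = inner ℝ (toL2 f) (toL2 h) := by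
  rw [Hip, ← integral_coe_unitInterval fun x => f x * h x, L2.inner_def]
  refine integral_congr_ae ?_
  filter_upwards [coeFn_toL2 hf, coeFn_toL2 hh] with x hfx hhx
  rw [hfx, hhx, Real.inner_apply]

lemma norm_toL2_sq (hf : MemLp (fun x : I => f x) 2) :
    ‖toL2 f‖ ^ 2 = ∫ x in (0 : ℝ)..1, f x ^ 2 := by
  rw [← real_inner_self_eq_norm_sq, ← Hip_eq_inner hf hf, Hip]
  simp only [sq]

lemma Hnorm_eq_norm (hf : MemLp (fun x : I => f x) 2) : Hnorm f = ‖toL2 f‖ := by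
  rw [Hnorm, ← norm_toL2_sq hf, Real.sqrt_sq (norm_nonneg _)]

namespace MemH

variable {u u1 u2 v v1 v2 : ℝ → ℝ}

lemma memLp (hu : MemH u u1 u2) : MemLp (fun x : I => u2 x) 2 :=
  (memLp_two_iff_integrable_sq (integrable_coe_unitInterval_iff.2 hu.2.2.1).1).2
    (integrable_coe_unitInterval_iff (f := fun x => u2 x ^ 2).2 hu.2.2.2.1)

lemma intervalIntegrable_deriv2 (hu : MemH u u1 u2) (x : I) : IntervalIntegrable u2 volume 0 x :=
  (intervalIntegrable_iff_integrableOn_Icc_of_le x.2.1).2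
    (hu.2.2.1.mono_set (Icc_subset_Icc_right x.2.2))

lemma continuousOn_deriv (hu : MemH u u1 u2) : ContinuousOn u1 (Icc 0 1) := by
  have hprimitive := intervalIntegral.continuousOn_primitive_interval'
    (hu.intervalIntegrable_deriv2 1) left_mem_uIcc
  rw [Icc.coe_one, uIcc_of_le zero_le_one] at hprimitive
  exact (continuousOn_const.add hprimitive).congr hu.2.1

lemma eq_integral_deriv (hu : MemH u u1 u2) (x : I) : u x = ∫ y in (0 : ℝ)..x, u1 y := by
  have hsub : Icc (0 : ℝ) x ⊆ Icc 0 1 := Icc_subset_Icc_right x.2.2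
  rw [intervalIntegral.integral_eq_sub_of_hasDerivAt_of_le x.2.1
    (fun y hy => (hu.1 y (hsub hy)).continuousWithinAt.mono hsub)
    (fun y hy => (hu.1 y (hsub (Ioo_subset_Icc_self hy))).hasDerivAt
      (Icc_mem_nhds hy.1 (hy.2.trans_le x.2.2)))
    ((hu.continuousOn_deriv.mono hsub).intervalIntegrable_of_Icc x.2.1), hu.2.2.2.2.1, sub_zero]

lemma slopeOp_toL2 (hu : MemH u u1 u2) (x : I) : slopeOp (toL2 u2) x = u1 x := by
  have hprimitive : ∀ z : I, ∫ y in Iic z, toL2 u2 y = u1 z - u1 0 := fun z => by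
    rw [integral_congr_ae (ae_restrict_of_ae (coeFn_toL2 hu.memLp)), setIntegral_Iic_coe,
      hu.2.1 z z.2, add_sub_cancel_left]
  have hmean : ∫ z : I, (u1 z - u1 0) = -u1 0 := by
    have hint : IntervalIntegrable u1 volume 0 1 :=
      hu.continuousOn_deriv.intervalIntegrable_of_Icc zero_le_one
    rw [integral_coe_unitInterval fun z => u1 z - u1 0,
      intervalIntegral.integral_sub hint intervalIntegrable_const, ← Icc.coe_one,
      ← hu.eq_integral_deriv, Icc.coe_one, hu.2.2.2.2.2, intervalIntegral.integral_const, sub_zero,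
      one_smul, zero_sub]
  simp only [slopeOp_apply, hprimitive, hmean, sub_neg_eq_add, sub_add_cancel]

lemma heightAt_toL2 (hu : MemH u u1 u2) (x : I) : heightAt x (toL2 u2) = u x := by
  simp only [heightAt_apply, hu.slopeOp_toL2, setIntegral_Iic_coe, ← hu.eq_integral_deriv]

lemma sub (hu : MemH u u1 u2) (hv : MemH v v1 v2) :
    MemH (fun x => u x - v x) (fun x => u1 x - v1 x) (fun x => u2 x - v2 x) := by
  refine ⟨fun x hx => (hu.1 x hx).sub (hv.1 x hx), fun x hx => ?_, hu.2.2.1.sub hv.2.2.1,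
    integrable_coe_unitInterval_iff.1 (hu.memLp.sub hv.memLp).integrable_sq, ?_, ?_⟩
  · have hu2 := hu.intervalIntegrable_deriv2 ⟨x, hx⟩
    have hv2 := hv.intervalIntegrable_deriv2 ⟨x, hx⟩
    simp only [intervalIntegral.integral_sub hu2 hv2, hu.2.1 x hx, hv.2.1 x hx]
    ring
  · simp only [hu.2.2.2.2.1, hv.2.2.2.2.1, sub_zero]
  · simp only [hu.2.2.2.2.2, hv.2.2.2.2.2, sub_zero]

lemma integral_sq_le (hu : MemH u u1 u2) :
    ∫ x in (0 : ℝ)..1, (u x ^ 2 + u1 x ^ 2 + u2 x ^ 2) ≤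
      (2 * ‖slopeOp‖ ^ 2 + 1) * ‖toL2 u2‖ ^ 2 := by
  set S := ‖slopeOp (toL2 u2)‖
  have hbound : ∀ x : I, u x ^ 2 + u1 x ^ 2 + u2 x ^ 2 ≤ 2 * S ^ 2 + u2 x ^ 2 := fun x => by
    have hux := sq_le_sq' (abs_le.1 (abs_heightAt_le x (toL2 u2))).1
      (abs_le.1 (abs_heightAt_le x (toL2 u2))).2
    have hu1x := sq_le_sq' (abs_le.1 ((slopeOp (toL2 u2)).norm_coe_le_norm x)).1
      (abs_le.1 ((slopeOp (toL2 u2)).norm_coe_le_norm x)).2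
    rw [hu.heightAt_toL2] at hux
    rw [hu.slopeOp_toL2] at hu1x
    linarith
  have hint : Integrable fun x : I => u2 x ^ 2 := hu.memLp.integrable_sq
  calc ∫ x in (0 : ℝ)..1, (u x ^ 2 + u1 x ^ 2 + u2 x ^ 2)
      = ∫ x : I, (u x ^ 2 + u1 x ^ 2 + u2 x ^ 2) :=
        (integral_coe_unitInterval fun x => u x ^ 2 + u1 x ^ 2 + u2 x ^ 2).symm
    _ ≤ ∫ x : I, (2 * S ^ 2 + u2 x ^ 2) :=
        integral_mono_of_nonneg (.of_forall fun x => by positivity)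
          ((integrable_const _).add hint) (.of_forall hbound)
    _ = 2 * S ^ 2 + ‖toL2 u2‖ ^ 2 := by
        rw [integral_add (integrable_const _) hint, integral_const, probReal_univ, one_smul,
          norm_toL2_sq hu.memLp, integral_coe_unitInterval fun x => u2 x ^ 2]
    _ ≤ 2 * (‖slopeOp‖ * ‖toL2 u2‖) ^ 2 + ‖toL2 u2‖ ^ 2 := by
        gcongr
        exact slopeOp.le_opNorm _
    _ = (2 * ‖slopeOp‖ ^ 2 + 1) * ‖toL2 u2‖ ^ 2 := by ring

end MemH

lemma integrableOn_IccExtend {f : I → ℝ} (hf : Integrable f) :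
    IntegrableOn (IccExtend zero_le_one f) (Icc 0 1) := by
  refine integrable_coe_unitInterval_iff.1 ?_
  simpa only [IccExtend_val] using hf

lemma memH_heightAt (f : UnitIntervalL2) :
    MemH (IccExtend zero_le_one fun x => heightAt x f) (IccExtend zero_le_one (slopeOp f))
      (IccExtend zero_le_one f) := by
  have hcont : Continuous (IccExtend zero_le_one (slopeOp f)) := (slopeOp f).continuous.Icc_extend'
  have hheight : ∀ x ∈ Icc (0 : ℝ) 1, IccExtend zero_le_one (fun x => heightAt x f) x =
      ∫ y in (0 : ℝ)..x, IccExtend zero_le_one (slopeOp f) y := fun x hx => by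
    rw [IccExtend_of_mem _ _ hx, heightAt_apply, ← setIntegral_Iic_coe _ ⟨x, hx⟩]
    simp only [IccExtend_val]
  have hslope : ∀ x ∈ Icc (0 : ℝ) 1, IccExtend zero_le_one (slopeOp f) x =
      (∫ y in (0 : ℝ)..x, IccExtend zero_le_one f y) - ∫ z, ∫ y in Iic z, f y := fun x hx => by
    rw [IccExtend_of_mem _ _ hx, slopeOp_apply, ← setIntegral_Iic_coe _ ⟨x, hx⟩]
    simp only [IccExtend_val]
  refine ⟨fun x hx => ?_, fun x hx => ?_,
    integrableOn_IccExtend ((Lp.memLp f).integrable one_le_two),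
    integrableOn_IccExtend (Lp.memLp f).integrable_sq, ?_, ?_⟩
  · exact (hcont.integral_hasStrictDerivAt 0 x).hasDerivAt.hasDerivWithinAt.congr hheight
      (hheight x hx)
  · rw [hslope x hx, hslope 0 (left_mem_Icc.2 zero_le_one), intervalIntegral.integral_same]
    ring
  · rw [hheight 0 (left_mem_Icc.2 zero_le_one), intervalIntegral.integral_same]
  · rw [IccExtend_right]
    exact congrArg (· f) heightAt_one

lemma slopeOp_eq_zero {f : UnitIntervalL2} (hf : ∀ x, heightAt x f = 0) : slopeOp f = 0 := by
  have hzero : IccExtend zero_le_one (fun x => heightAt x f) = fun _ => (0 : ℝ) :=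
    funext fun x => hf _
  ext x
  have hderiv := (memH_heightAt f).1 x x.2
  rw [IccExtend_val, hzero] at hderiv
  exact (uniqueDiffOn_Icc_zero_one x x.2).eq_deriv _ hderiv (hasDerivWithinAt_const ..)

lemma eq_zero_of_slopeOp_eq_zero {f : UnitIntervalL2} (hf : slopeOp f = 0) : f = 0 := by
  have hmem := memH_heightAt f
  have hprimitive : ∀ x ∈ Icc (0 : ℝ) 1, ∫ y in (0 : ℝ)..x, IccExtend zero_le_one f y = 0 :=
    fun x hx => by simpa [hf, IccExtend] using (hmem.2.1 x hx).symm
  have hderiv := (hmem.intervalIntegrable_deriv2 1).ae_hasDerivAt_integral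
  refine (Lp.eq_zero_iff_ae_eq_zero).2 ?_
  filter_upwards [measurePreserving_coe.quasiMeasurePreserving.ae (ae_restrict_of_ae hderiv)]
    with x hx
  rw [Icc.coe_one, uIcc_of_le zero_le_one] at hx
  have hx' := (hx x.2 0 (left_mem_Icc.2 zero_le_one)).hasDerivWithinAt (s := Icc 0 1)
  rw [IccExtend_val] at hx'
  exact (uniqueDiffOn_Icc_zero_one x x.2).eq_deriv _ hx'
    ((hasDerivWithinAt_const (x : ℝ) _ 0).congr hprimitive (hprimitive x x.2))

end SobolevFunctions

section ElasticEnergy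

open unitInterval

lemma hasDerivAt_inv_one_add_sq_rpow (a p : ℝ) : HasDerivAt (fun p : ℝ => ((1 + p ^ 2) ^ a)⁻¹)
    (-(2 * a) * p * ((1 + p ^ 2) ^ (a + 1))⁻¹) p := by
  have hpos : ∀ q : ℝ, 0 < 1 + q ^ 2 := fun q => by positivity
  have hsq : HasDerivAt (fun q : ℝ => 1 + q ^ 2) (2 * p) p := by
    simpa using (hasDerivAt_pow 2 p).const_add 1
  simp only [← Real.rpow_neg (hpos _).le, neg_add']
  exact (hsq.rpow_const (.inl (hpos p).ne')).congr_deriv (by ring)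

lemma continuous_inv_one_add_sq_rpow (a : ℝ) : Continuous fun p : ℝ => ((1 + p ^ 2) ^ a)⁻¹ :=
  continuous_iff_continuousAt.2 fun p => (hasDerivAt_inv_one_add_sq_rpow a p).continuousAt

/-- The weight `(1 + p²)^{-5/2}` of the elastic energy, as a function of the slope `p = u'`. -/
def elasticWeight : C(ℝ, ℝ) := ⟨_, continuous_inv_one_add_sq_rpow (5 / 2)⟩

/-- The derivative of `elasticWeight`. -/
def elasticWeightDeriv : C(ℝ, ℝ) :=
  ⟨_, (continuous_const_mul (-5)).mul (continuous_inv_one_add_sq_rpow (7 / 2))⟩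

lemma elasticWeight_pos (p : ℝ) : 0 < elasticWeight p := by
  change 0 < ((1 + p ^ 2) ^ (5 / 2 : ℝ))⁻¹
  positivity

lemma hasDerivAt_elasticWeight (p : ℝ) : HasDerivAt elasticWeight (elasticWeightDeriv p) p := by
  refine (hasDerivAt_inv_one_add_sq_rpow (5 / 2) p).congr_deriv ?_
  change _ = -5 * p * ((1 + p ^ 2) ^ (7 / 2 : ℝ))⁻¹
  norm_num

/-- The elastic energy `∫ u''² / (1 + u'²)^{5/2}` as a function of `u'' ∈ L²(0,1)`. -/
def elasticEnergy : UnitIntervalL2 → ℝ := weightedEnergy elasticWeight slopeOp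

lemma bddBelow_range_elasticEnergy : BddBelow (range elasticEnergy) :=
  ⟨0, forall_mem_range.2 <| weightedEnergy_nonneg fun p => (elasticWeight_pos p).le⟩

lemma contDiff_elasticEnergy : ContDiff ℝ 1 elasticEnergy :=
  contDiff_weightedEnergy hasDerivAt_elasticWeight

lemma hasGardingInequality_elasticEnergy : HasGardingInequality elasticEnergy slopeOp :=
  hasGardingInequality_weightedEnergy hasDerivAt_elasticWeight elasticWeight_pos

lemma fderiv_elasticEnergy (f : UnitIntervalL2) :
    fderiv ℝ elasticEnergy f = weightedEnergyDeriv elasticWeight elasticWeightDeriv slopeOp f :=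
  (hasFDerivAt_weightedEnergy hasDerivAt_elasticWeight f).fderiv

lemma MemH.elDE_eq {u u1 u2 φ φ1 φ2 : ℝ → ℝ} (hu : MemH u u1 u2) (hφ : MemH φ φ1 φ2) :
    elDE u1 u2 φ1 φ2 = fderiv ℝ elasticEnergy (toL2 u2) (toL2 φ2) := by
  have hbending : ∫ x in (0 : ℝ)..1, u2 x * φ2 x / (1 + u1 x ^ 2) ^ (5 / 2 : ℝ) =
      inner ℝ (mulL2 volume (elasticWeight.comp (slopeOp (toL2 u2))) (toL2 u2)) (toL2 φ2) := by
    rw [inner_mulL2, ← integral_coe_unitInterval]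
    refine integral_congr_ae ?_
    filter_upwards [coeFn_toL2 hu.memLp, coeFn_toL2 hφ.memLp] with x hux hφx
    rw [hux, hφx, ContinuousMap.comp_apply, hu.slopeOp_toL2, div_eq_inv_mul]
    rfl
  have hslope : -5 * ∫ x in (0 : ℝ)..1, u2 x ^ 2 * u1 x * φ1 x / (1 + u1 x ^ 2) ^ (7 / 2 : ℝ) =
      inner ℝ (mulL2 volume (elasticWeightDeriv.comp (slopeOp (toL2 u2)) * slopeOp (toL2 φ2))
        (toL2 u2)) (toL2 u2) := by
    rw [inner_mulL2, ← intervalIntegral.integral_const_mul, ← integral_coe_unitInterval]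
    refine integral_congr_ae ?_
    filter_upwards [coeFn_toL2 hu.memLp] with x hux
    rw [hux, ContinuousMap.mul_apply, ContinuousMap.comp_apply, hu.slopeOp_toL2, hφ.slopeOp_toL2]
    change _ = -5 * u1 x * ((1 + u1 x ^ 2) ^ (7 / 2 : ℝ))⁻¹ * φ1 x * (u2 x * u2 x)
    ring
  rw [fderiv_elasticEnergy, weightedEnergyDeriv_apply, ← hbending, ← hslope, elDE, sub_eq_add_neg,
    neg_mul]

end ElasticEnergy

section ObstacleSet

open unitInterval

/-- The second derivatives of the elements of `W^{2,2}(0,1) ∩ W₀^{1,2}(0,1)` lying above `ψ`. -/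
def obstacleSet (ψ : ℝ → ℝ) : Set UnitIntervalL2 := {f | ∀ᵐ x : I, ψ x ≤ heightAt x f}

variable {ψ : ℝ → ℝ}

lemma isClosed_obstacleSet : IsClosed (obstacleSet ψ) := by
  refine isClosed_of_closure_subset fun f hf => ?_
  obtain ⟨s, hs, hsf⟩ := mem_closure_iff_seq_limit.1 hf
  filter_upwards [ae_all_iff.2 hs] with x hx
  exact ge_of_tendsto' (((heightAt x).continuous.tendsto f).comp hsf) hx

lemma MemC.toL2_mem_obstacleSet {u u1 u2 : ℝ → ℝ} (hu : MemC ψ u u1 u2) :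
    toL2 u2 ∈ obstacleSet ψ := by
  filter_upwards [(ae_restrict_iff_subtype measurableSet_Icc).1 hu.2] with x hx
  rwa [hu.1.heightAt_toL2]

lemma memC_heightAt {f : UnitIntervalL2} (hf : f ∈ obstacleSet ψ) :
    MemC ψ (IccExtend zero_le_one fun x => heightAt x f) (IccExtend zero_le_one (slopeOp f))
      (IccExtend zero_le_one f) := by
  refine ⟨memH_heightAt f, (ae_restrict_iff_subtype measurableSet_Icc).2 ?_⟩
  filter_upwards [hf] with x hx
  rwa [IccExtend_val]

end ObstacleSet

namespace IsOGFel

open unitInterval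

variable {ψ u₀ u₀1 u₀2 : ℝ → ℝ} {u u1 u2 v v1 v2 : ℝ → ℝ → ℝ}

lemma memH (hflow : IsOGFel ψ u u1 u2 v v1 v2 u₀ u₀1 u₀2) {t : ℝ} (ht : 0 ≤ t) :
    MemH (u t) (u1 t) (u2 t) := (hflow.memC t ht).1

lemma ae_hasDerivAt_toL2 (hflow : IsOGFel ψ u u1 u2 v v1 v2 u₀ u₀1 u₀2) :
    ∀ᵐ t ∂volume.restrict (Ioi 0), HasDerivAt (fun t => toL2 (u2 t)) (toL2 (v2 t)) t := by
  filter_upwards [hflow.derivAe, hflow.vMemH, ae_restrict_mem measurableSet_Ioi]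
    with t hquotient hv (ht : 0 < t)
  rw [hasDerivAt_iff_tendsto_slope_zero, tendsto_iff_norm_sub_tendsto_zero]
  refine hquotient.congr' ?_
  have hpos : ∀ᶠ h : ℝ in 𝓝 0, 0 < t + h :=
    continuousAt_const.add continuousAt_id |>.eventually_const_lt (by simpa using ht)
  filter_upwards [eventually_nhdsWithin_of_eventually_nhds hpos] with h hh
  have hu2 := (hflow.memH ht.le).memLp
  have hu2h := (hflow.memH hh.le).memLp
  have hdiff : MemLp (fun x : I => u2 (t + h) x - u2 t x) 2 := hu2h.sub hu2
  have hquot : MemLp (fun x : I => (u2 (t + h) x - u2 t x) / h) 2 := by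
    simpa only [div_eq_mul_inv] using hdiff.mul_const h⁻¹
  have hsub : MemLp (fun x : I => (u2 (t + h) x - u2 t x) / h - v2 t x) 2 := hquot.sub hv.memLp
  rw [Hnorm_eq_norm (f := fun x => (u2 (t + h) x - u2 t x) / h - v2 t x) hsub,
    toL2_sub (f := fun x => (u2 (t + h) x - u2 t x) / h) hquot hv.memLp,
    toL2_div_const (f := fun x => u2 (t + h) x - u2 t x) hdiff, toL2_sub hu2h hu2]

lemma ae_memH_velocity (hflow : IsOGFel ψ u u1 u2 v v1 v2 u₀ u₀1 u₀2) {s : ℝ} (hs : 0 ≤ s) (t : ℝ) :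
    ∀ᵐ r ∂volume.restrict (Ioc s t), MemH (v r) (v1 r) (v2 r) :=
  ae_restrict_of_ae_restrict_of_subset (fun _ hr => hs.trans_lt hr.1) hflow.vMemH

lemma intervalIntegrable_velocity_sq (hflow : IsOGFel ψ u u1 u2 v v1 v2 u₀ u₀1 u₀2) {T : ℝ}
    (hT : 0 < T) : IntervalIntegrable (fun t => ‖toL2 (v2 t)‖ ^ 2) volume 0 T := by
  rw [intervalIntegrable_iff_integrableOn_Ioc_of_le hT.le]
  refine (hflow.sqInt T hT).congr ?_
  filter_upwards [hflow.ae_memH_velocity le_rfl T] with t ht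
  exact (norm_toL2_sq ht.memLp).symm

lemma intervalIntegrable_velocity (hflow : IsOGFel ψ u u1 u2 v v1 v2 u₀ u₀1 u₀2) {T : ℝ}
    (hT : 0 < T) : IntervalIntegrable (fun t => toL2 (v2 t)) volume 0 T := by
  have hsq := hflow.intervalIntegrable_velocity_sq hT
  have hmeas : AEStronglyMeasurable (fun t => toL2 (v2 t)) (volume.restrict (Ioi 0)) :=
    (aestronglyMeasurable_deriv (fun t => toL2 (u2 t)) _).congr <|
      hflow.ae_hasDerivAt_toL2.mono fun t ht => ht.deriv
  rw [intervalIntegrable_iff_integrableOn_Ioc_of_le hT.le] at hsq ⊢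
  exact (memLp_two_iff_integrable_sq_norm (hmeas.mono_set Ioc_subset_Ioi_self)).2 hsq |>.integrable
    one_le_two

lemma toL2_sub_toL2_eq_integral (hflow : IsOGFel ψ u u1 u2 v v1 v2 u₀ u₀1 u₀2) {s t : ℝ}
    (hs : 0 ≤ s) (hst : s ≤ t) : toL2 (u2 t) - toL2 (u2 s) = ∫ r in s..t, toL2 (v2 r) := by
  have hint : IntervalIntegrable (fun t => toL2 (v2 t)) volume s t := by
    have ht : 0 < t + 1 := by linarith
    refine (hflow.intervalIntegrable_velocity ht).mono_set ?_
    rw [uIcc_of_le hst, uIcc_of_le ht.le]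
    exact Icc_subset_Icc hs (by linarith)
  refine sub_eq_zero.1 (eq_zero_of_slopeOp_eq_zero (slopeOp_eq_zero fun x => ?_))
  have hvelocity : ∫ r in s..t, heightAt x (toL2 (v2 r)) = ∫ r in s..t, v r x := by
    rw [intervalIntegral.integral_of_le hst, intervalIntegral.integral_of_le hst]
    refine integral_congr_ae ?_
    filter_upwards [hflow.ae_memH_velocity hs t] with r hr
    exact hr.heightAt_toL2 x
  rw [map_sub, map_sub, ← (heightAt x).intervalIntegral_comp_comm hint, hvelocity,
    ← hflow.ftc s t hs hst x x.2, (hflow.memH (hs.trans hst)).heightAt_toL2,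
    (hflow.memH hs).heightAt_toL2, sub_self]

lemma ae_variational_inequality (hflow : IsOGFel ψ u u1 u2 v v1 v2 u₀ u₀1 u₀2) :
    ∀ᵐ t ∂volume.restrict (Ioi 0), ∀ z ∈ obstacleSet ψ,
      0 ≤ inner ℝ (toL2 (v2 t)) (z - toL2 (u2 t)) +
        fderiv ℝ elasticEnergy (toL2 (u2 t)) (z - toL2 (u2 t)) := by
  filter_upwards [hflow.fvi, hflow.vMemH, ae_restrict_mem measurableSet_Ioi]
    with t hfvi hv (ht : 0 < t) z hz
  have hu := hflow.memH ht.le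
  have hzC := memC_heightAt hz
  have hdiff := hzC.1.sub hu
  have hineq := hfvi _ _ _ hzC
  rwa [hu.elDE_eq hdiff, Hip_eq_inner hv.memLp hdiff.memLp, toL2_sub hzC.1.memLp hu.memLp,
    toL2_IccExtend] at hineq

lemma isObstacleGradientFlow (hflow : IsOGFel ψ u u1 u2 v v1 v2 u₀ u₀1 u₀2) :
    IsObstacleGradientFlow elasticEnergy (obstacleSet ψ) (fun t => toL2 (u2 t))
      (fun t => toL2 (v2 t)) where
  mem t ht := (hflow.memC t ht).toL2_mem_obstacleSet
  absolutelyContinuous _ hT := absolutelyContinuousOnInterval_of_sub_eq_integral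
    (hflow.intervalIntegrable_velocity hT) hT.le fun _ _ => hflow.toL2_sub_toL2_eq_integral
  hasDerivAt := hflow.ae_hasDerivAt_toL2
  sq_integrable _ := hflow.intervalIntegrable_velocity_sq
  variational_inequality := hflow.ae_variational_inequality

/-- The energy decreases along the flow and controls `∫ u''²` as long as `u'` is bounded. -/
lemma exists_norm_toL2_le (hflow : IsOGFel ψ u u1 u2 v v1 v2 u₀ u₀1 u₀2) {S : ℝ}
    (hS : ∀ᶠ t in atTop, ‖slopeOp (toL2 (u2 t))‖ ≤ S) : ∃ R, ∀ᶠ t in atTop, ‖toL2 (u2 t)‖ ≤ R := by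
  obtain ⟨R, hR⟩ := exists_norm_le_of_weightedEnergy_le (P := slopeOp) elasticWeight_pos S
    (elasticEnergy (toL2 (u2 0)))
  refine ⟨R, ?_⟩
  filter_upwards [hS, eventually_ge_atTop 0] with t htS ht
  exact hR _ htS (hflow.isObstacleGradientFlow.energy_le contDiff_elasticEnergy ht)

lemma tendsto_sobolev (hflow : IsOGFel ψ u u1 u2 v v1 v2 u₀ u₀1 u₀2) {θ : ℕ → ℝ}
    (hθ : ∀ n, 0 ≤ θ n) {w w1 w2 : ℝ → ℝ} (hw : MemH w w1 w2)
    (hconv : Tendsto (fun n => toL2 (u2 (θ n))) atTop (𝓝 (toL2 w2))) :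
    Tendsto (fun n => ∫ x in (0 : ℝ)..1,
      ((u (θ n) x - w x) ^ 2 + (u1 (θ n) x - w1 x) ^ 2 + (u2 (θ n) x - w2 x) ^ 2))
      atTop (𝓝 0) := by
  have hbound : Tendsto (fun n => (2 * ‖slopeOp‖ ^ 2 + 1) * ‖toL2 (u2 (θ n)) - toL2 w2‖ ^ 2)
      atTop (𝓝 0) := by
    simpa using ((tendsto_iff_norm_sub_tendsto_zero.1 hconv).pow 2).const_mul _
  refine squeeze_zero (fun n => ?_) (fun n => ?_) hbound
  · exact intervalIntegral.integral_nonneg zero_le_one fun x _ => by positivity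
  · rw [← toL2_sub (hflow.memH (hθ n)).memLp hw.memLp]
    exact ((hflow.memH (hθ n)).sub hw).integral_sq_le

lemma exists_tendsto_of_bounded_slope (hflow : IsOGFel ψ u u1 u2 v v1 v2 u₀ u₀1 u₀2)
    (hS : ∃ S, ∀ᶠ t in atTop, ‖slopeOp (toL2 (u2 t))‖ ≤ S) :
    ∃ θ : ℕ → ℝ, (∀ n, 0 ≤ θ n) ∧ Tendsto θ atTop atTop ∧
      ∃ w w1 w2 : ℝ → ℝ, MemC ψ w w1 w2 ∧
        Tendsto (fun n => ∫ x in (0 : ℝ)..1,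
          ((u (θ n) x - w x) ^ 2 + (u1 (θ n) x - w1 x) ^ 2 + (u2 (θ n) x - w2 x) ^ 2))
          atTop (𝓝 0) ∧
        ∀ z z1 z2 : ℝ → ℝ, MemC ψ z z1 z2 →
          0 ≤ elDE w1 w2 (fun x => z1 x - w1 x) (fun x => z2 x - w2 x) := by
  obtain ⟨S, hS⟩ := hS
  obtain ⟨θ, hθ0, hθ, f, hf, hconv, hcrit⟩ := exists_tendsto_of_bounded_obstacleGradientFlow
    hflow.isObstacleGradientFlow isClosed_obstacleSet contDiff_elasticEnergy
    bddBelow_range_elasticEnergy hasGardingInequality_elasticEnergy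
    (isCompactOperator_kernelOperator slopeKernel) (hflow.exists_norm_toL2_le hS)
  have hw := memC_heightAt hf
  refine ⟨θ, hθ0, hθ, _, _, _, hw, hflow.tendsto_sobolev hθ0 hw.1 ?_, fun z z1 z2 hz => ?_⟩
  · rwa [toL2_IccExtend]
  · rw [hw.1.elDE_eq (hz.1.sub hw.1), toL2_sub hz.1.memLp hw.1.memLp, toL2_IccExtend]
    exact hcrit _ hz.toL2_mem_obstacleSet

lemma norm_slopeOp_le_iSup (hflow : IsOGFel ψ u u1 u2 v v1 v2 u₀ u₀1 u₀2) {t : ℝ} (ht : 0 ≤ t) :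
    ‖slopeOp (toL2 (u2 t))‖ ≤ ⨆ x : Icc (0 : ℝ) 1, |u1 t x| := by
  simp only [(slopeOp (toL2 (u2 t))).norm_eq_iSup_norm, (hflow.memH ht).slopeOp_toL2,
    Real.norm_eq_abs, le_refl]

lemma exists_tendsto_iSup_atTop (hflow : IsOGFel ψ u u1 u2 v v1 v2 u₀ u₀1 u₀2)
    (hS : ∀ S, ∃ᶠ t in atTop, S < ‖slopeOp (toL2 (u2 t))‖) :
    ∃ θ : ℕ → ℝ, (∀ n, 0 ≤ θ n) ∧ Tendsto θ atTop atTop ∧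
      Tendsto (fun n => ⨆ x : Icc (0 : ℝ) 1, |u1 (θ n) x|) atTop atTop := by
  choose θ hθn hθ using fun n : ℕ => frequently_atTop.1 (hS n) n
  have hθ0 : ∀ n, 0 ≤ θ n := fun n => n.cast_nonneg.trans (hθn n)
  exact ⟨θ, hθ0, tendsto_atTop_mono hθn tendsto_natCast_atTop_atTop,
    tendsto_atTop_mono (fun n => (hθ n).le.trans (hflow.norm_slopeOp_le_iSup (hθ0 n)))
      tendsto_natCast_atTop_atTop⟩

end IsOGFel

theorem elastic_flow_subconvergence_general (ψ u₀ u₀1 u₀2 : ℝ → ℝ) (u u1 u2 v v1 v2 : ℝ → ℝ → ℝ)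
    (hflow : IsOGFel ψ u u1 u2 v v1 v2 u₀ u₀1 u₀2) :
    (∃ θ : ℕ → ℝ, (∀ n, 0 ≤ θ n) ∧ Tendsto θ atTop atTop ∧
      Tendsto (fun n => ⨆ x : Icc (0 : ℝ) 1, |u1 (θ n) x|) atTop atTop) ∨
    (∃ θ : ℕ → ℝ, (∀ n, 0 ≤ θ n) ∧ Tendsto θ atTop atTop ∧
      ∃ w w1 w2 : ℝ → ℝ, MemC ψ w w1 w2 ∧
        Tendsto (fun n => ∫ x in (0 : ℝ)..1,
          ((u (θ n) x - w x) ^ 2 + (u1 (θ n) x - w1 x) ^ 2 + (u2 (θ n) x - w2 x) ^ 2))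
          atTop (𝓝 0) ∧
        ∀ z z1 z2 : ℝ → ℝ, MemC ψ z z1 z2 →
          0 ≤ elDE w1 w2 (fun x => z1 x - w1 x) (fun x => z2 x - w2 x)) := by
  by_cases hS : ∃ S, ∀ᶠ t in atTop, ‖slopeOp (toL2 (u2 t))‖ ≤ S
  · exact .inr (hflow.exists_tendsto_of_bounded_slope hS)
  · simp only [not_exists, not_eventually, not_le] at hS
    exact .inl (hflow.exists_tendsto_iSup_atTop hS)

/-- **Subconvergence behavior of the elastic flow.** Let `ψ` be a continuous obstacle with
`ψ(0), ψ(1) < 0` which is `C¹` near the boundary, and let `(u(t))_{t≥0}` be the Obstacle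
Gradient Flow for the elastic energy starting at `u₀ ∈ W^{3,∞}(0,1) ∩ H` with
`u₀''(0) = u₀''(1) = 0`. Then either (1) there is a sequence `θ_n → ∞` with
`‖u(θ_n)'‖_∞ → ∞`, or (2) there are `θ_n → ∞` and `u_∞ ∈ C` with `u(θ_n) → u_∞` in
`W^{2,2}(0,1)` and `(∇E(u_∞), z - u_∞) ≥ 0` for all `z ∈ C`. -/
theorem elastic_flow_subconvergence
    (ψ : ℝ → ℝ) (hψcont : ContinuousOn ψ (Icc 0 1)) (hψ0 : ψ 0 < 0) (hψ1 : ψ 1 < 0)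
    (hψC1 : ∃ η : ℝ, 0 < η ∧
      ContDiffOn ℝ 1 ψ (Icc 0 η) ∧ ContDiffOn ℝ 1 ψ (Icc (1 - η) 1))
    (u₀ u₀1 u₀2 u₀3 : ℝ → ℝ)
    (hu₀C : MemC ψ u₀ u₀1 u₀2)
    (hu₀W3 : ∀ x ∈ Icc (0:ℝ) 1, u₀2 x = u₀2 0 + ∫ y in (0:ℝ)..x, u₀3 y)
    (hu₀W3inf : ∃ M : ℝ, ∀ x ∈ Icc (0:ℝ) 1, |u₀3 x| ≤ M)
    (hNav0 : u₀2 0 = 0) (hNav1 : u₀2 1 = 0)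
    (u u1 u2 v v1 v2 : ℝ → ℝ → ℝ)
    (hflow : IsOGFel ψ u u1 u2 v v1 v2 u₀ u₀1 u₀2) :
    (∃ θ : ℕ → ℝ, (∀ n, 0 ≤ θ n) ∧ Filter.Tendsto θ Filter.atTop Filter.atTop ∧
      Filter.Tendsto (fun n => ⨆ x : Icc (0:ℝ) 1, |u1 (θ n) x|)
        Filter.atTop Filter.atTop) ∨
    (∃ θ : ℕ → ℝ, (∀ n, 0 ≤ θ n) ∧ Filter.Tendsto θ Filter.atTop Filter.atTop ∧
      ∃ w w1 w2 : ℝ → ℝ, MemC ψ w w1 w2 ∧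
        Filter.Tendsto (fun n => ∫ x in (0:ℝ)..1,
            ((u (θ n) x - w x) ^ 2 + (u1 (θ n) x - w1 x) ^ 2 + (u2 (θ n) x - w2 x) ^ 2))
          Filter.atTop (nhds 0) ∧
        ∀ z z1 z2 : ℝ → ℝ, MemC ψ z z1 z2 →
          0 ≤ elDE w1 w2 (fun x => z1 x - w1 x) (fun x => z2 x - w2 x)) :=
  elastic_flow_subconvergence_general ψ u₀ u₀1 u₀2 u u1 u2 v v1 v2 hflow
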